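/- Let Λ be an artin algebra and P the class of finitely generated right Λ-modules of finite projective dimension. If P is contravariantly finite in mod Λ, then the finitistic dimension of Λ equals the maximum of the projective dimensions of the minimal right P-approximations of the indecomposable injective Λ-modules; in particular it is finite. -/

import Mathlib

open CategoryTheory

universe u

/-- The `n`-th Ext group of `A`-modules `M`, `N`. -/
noncomputable abbrev ext {A : Type u} [Ring A] (M N : ModuleCat.{u} A) (n : ℕ) : Type u :=
  ((Ext ℤ (ModuleCat.{u} A) n).obj (Opposite.op M)).obj N

/-- `Ext^i(N, M) = 0` for all `i > 0`. -/
def ExtVanish {A : Type u} [Ring A] (N M : ModuleCat.{u} A) : Prop :=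
  ∀ i, 0 < i → Subsingleton (ext N M i)

/-- `M` has projective dimension at most `n`, i.e. `Ext^i(M, -) = 0` for `i > n`. -/
def pdLE {A : Type u} [Ring A] (M : ModuleCat.{u} A) (n : ℕ) : Prop :=
  ∀ i, n < i → ∀ N : ModuleCat.{u} A, Subsingleton (ext M N i)

/-- The projective dimension of `M`, as an element of `ℕ∞` (`⊤` if infinite). -/
noncomputable def projDim {A : Type u} [Ring A] (M : ModuleCat.{u} A) : ℕ∞ :=
  sInf {d : ℕ∞ | ∃ n : ℕ, d = n ∧ pdLE M n}

/-- Membership in `𝒫`: finitely generated of finite projective dimension. -/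
def InP {A : Type u} [Ring A] (M : ModuleCat.{u} A) : Prop :=
  Module.Finite A M ∧ ∃ n, pdLE M n

/-- The finitistic dimension of `A`. -/
noncomputable def findim (A : Type u) [Ring A] : ℕ∞ :=
  sSup {d : ℕ∞ | ∃ M : ModuleCat.{u} A, InP M ∧ d = projDim M}

/-- `M` is a direct summand of `S`. -/
def IsSummand {A : Type u} [Ring A] (M S : ModuleCat.{u} A) : Prop :=
  ∃ (s : M →ₗ[A] S) (r : S →ₗ[A] M), r ∘ₗ s = LinearMap.id

/-- `M` belongs to `add 𝒳`: `M` is a direct summand of a finite direct sum of objects of `𝒳`. -/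
def InAddOf {A : Type u} [Ring A] (X : ModuleCat.{u} A → Prop) (M : ModuleCat.{u} A) : Prop :=
  ∃ (k : ℕ) (F : Fin k → ModuleCat.{u} A), (∀ i, X (F i)) ∧
    IsSummand M (ModuleCat.of A (DirectSum (Fin k) (fun i => ↥(F i))))

/-- `M` belongs to `Add T`: `M` is a direct summand of an arbitrary direct sum of copies of `T`. -/
def InAdd {A : Type u} [Ring A] (T M : ModuleCat.{u} A) : Prop :=
  ∃ ι : Type u, IsSummand M (ModuleCat.of A (DirectSum ι (fun _ => ↥T)))

/-- `M ∈ 𝒳^⊥`: `Ext^i(N, M) = 0` for all `N ∈ 𝒳` and `i > 0`. -/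
def InPerpOf {A : Type u} [Ring A] (X : ModuleCat.{u} A → Prop) (M : ModuleCat.{u} A) : Prop :=
  ∀ N, X N → ExtVanish N M

/-- `M` is Ext-injective in `𝒫`: `M ∈ 𝒫` and `Ext^1(N, M) = 0` for all `N ∈ 𝒫`. -/
def ExtInjInP {A : Type u} [Ring A] (M : ModuleCat.{u} A) : Prop :=
  InP M ∧ ∀ N : ModuleCat.{u} A, InP N → Subsingleton (ext N M 1)

/-- `M` is splitting injective in `𝒳`: every injective map `M → Y` with `Y ∈ add 𝒳` splits. -/
def SplittingInjIn {A : Type u} [Ring A] (X : ModuleCat.{u} A → Prop)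
    (M : ModuleCat.{u} A) : Prop :=
  ∀ Y : ModuleCat.{u} A, InAddOf X Y → ∀ f : M →ₗ[A] Y, Function.Injective f →
    ∃ r : Y →ₗ[A] M, r ∘ₗ f = LinearMap.id

/-- `0 → M₁ → M₂ → M₃ → 0` is a short exact sequence. -/
def ShortExact {A : Type u} [Ring A] {M₁ M₂ M₃ : ModuleCat.{u} A}
    (f : M₁ →ₗ[A] M₂) (g : M₂ →ₗ[A] M₃) : Prop :=
  Function.Injective f ∧ Function.Exact f g ∧ Function.Surjective g

/-- `f : XM → M` is a right `𝒳`-approximation of `M`. -/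
def IsRightApprox {A : Type u} [Ring A] (X : ModuleCat.{u} A → Prop)
    {XM M : ModuleCat.{u} A} (f : XM →ₗ[A] M) : Prop :=
  X XM ∧ ∀ Y : ModuleCat.{u} A, X Y → ∀ g : Y →ₗ[A] M, ∃ h : Y →ₗ[A] XM, f ∘ₗ h = g

/-- `f : XM → M` is a minimal right `𝒳`-approximation. -/
def IsMinimalRightApprox {A : Type u} [Ring A] (X : ModuleCat.{u} A → Prop)
    {XM M : ModuleCat.{u} A} (f : XM →ₗ[A] M) : Prop :=
  IsRightApprox X f ∧ ∀ g : XM →ₗ[A] XM, f ∘ₗ g = f → Function.Bijective g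

/-- `𝒳` is contravariantly finite in `mod A`. -/
def ContravariantlyFinite {A : Type u} [Ring A] (X : ModuleCat.{u} A → Prop) : Prop :=
  ∀ M : ModuleCat.{u} A, Module.Finite A M →
    ∃ (XM : ModuleCat.{u} A) (f : XM →ₗ[A] M), IsRightApprox X f

/-- `M` is an indecomposable module: nonzero, and its only idempotent endomorphisms
are `0` and the identity. -/
def Indec {A : Type u} [Ring A] (M : ModuleCat.{u} A) : Prop :=
  (¬ Subsingleton M) ∧ ∀ e : M →ₗ[A] M, e ∘ₗ e = e → e = 0 ∨ e = LinearMap.id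

/-- `L` admits a finite coresolution `0 → L → C^0 → ⋯ → C^n → 0` with all `C^i ∈ add T`. -/
def HasAddCoresolution {A : Type u} [Ring A] (T L : ModuleCat.{u} A) : Prop :=
  ∃ (C : ℕ → ModuleCat.{u} A) (d : ∀ i, C i →ₗ[A] C (i+1)) (f : L →ₗ[A] C 0),
    Function.Injective f ∧ Function.Exact f (d 0) ∧
    (∀ i, Function.Exact (d i) (d (i+1))) ∧
    (∀ i, InAddOf (fun X => X = T) (C i)) ∧
    (∃ m, ∀ i, m ≤ i → Subsingleton (C i))

/-- `T` is a tilting `A`-module. -/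
def IsTilting {A : Type u} [Ring A] (T : ModuleCat.{u} A) : Prop :=
  Module.Finite A T ∧ (∃ n, pdLE T n) ∧ ExtVanish T T ∧
    HasAddCoresolution T (ModuleCat.of A A)

/-- `𝒳` is a resolving subcategory of `mod A`. -/
def Resolving {A : Type u} [Ring A] (X : ModuleCat.{u} A → Prop) : Prop :=
  (∀ M : ModuleCat.{u} A, Module.Finite A M → Module.Projective A M → X M) ∧
  (∀ (M₁ M₂ M₃ : ModuleCat.{u} A) (f : M₁ →ₗ[A] M₂) (g : M₂ →ₗ[A] M₃),
      ShortExact f g → X M₁ → X M₃ → X M₂) ∧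
  (∀ (M₁ M₂ M₃ : ModuleCat.{u} A) (f : M₁ →ₗ[A] M₂) (g : M₂ →ₗ[A] M₃),
      ShortExact f g → X M₂ → X M₃ → X M₁)

/-- `F` is a complete irredundant family of representatives of the isomorphism classes of
indecomposable Ext-injective modules in `𝒫`. -/
def IsCompleteExtInjFamily {A : Type u} [Ring A] {ι : Type u}
    (F : ι → ModuleCat.{u} A) : Prop :=
  (∀ i, Indec (F i) ∧ ExtInjInP (F i)) ∧
  (∀ M : ModuleCat.{u} A, Indec M → ExtInjInP M → ∃ i, Nonempty (M ≃ₗ[A] F i)) ∧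
  (∀ i j, Nonempty (F i ≃ₗ[A] F j) → i = j)

/-- `I` is a complete set of pairwise non-isomorphic indecomposable injective modules. -/
def IsCompleteIndecInjFamily {A : Type u} [Ring A] {n : ℕ}
    (I : Fin n → ModuleCat.{u} A) : Prop :=
  (∀ j, Module.Finite A (I j) ∧ Module.Injective A (I j) ∧ Indec (I j)) ∧
  (∀ M : ModuleCat.{u} A, Module.Finite A M → Module.Injective A M → Indec M →
      ∃ j, Nonempty (M ≃ₗ[A] I j)) ∧
  (∀ j k, Nonempty (I j ≃ₗ[A] I k) → j = k)

/-!
By Wakamatsu's lemma, a minimal right approximation `f : X → M` by the extension-closed class `𝒫`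
satisfies `Ext¹(𝒫, ker f) = 0`. This is expressed here as a lifting property against syzygies,
which passes to extensions of `M` by a horseshoe argument that keeps the same bound on `pd X`.

Applied to the simple modules, which are summands of `B ⧸ rad B`, this covers every finitely
generated module by modules of projective dimension at most some `m`; a module in `𝒫` is a summand
of its cover, so `findim B ≤ m`. Applied to the indecomposable injectives, it gives the same for
all finitely generated injectives with `t = max pd (A j)` in place of `m`. Every `M` in `𝒫` embeds
in such an injective, the embedding lifts to the cover `X`, and its cokernel `N` lies again in `𝒫`;
from `0 → M → X → N → 0` a bound `t + k + 1` for all of `𝒫` improves to `t + k`, hence to `t`.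
-/

section ProjectiveDimension

variable {B : Type u} [Ring B]

theorem subsingleton_ext_succ_iff {M N : ModuleCat.{u} B} (P : ProjectiveResolution M) (p : ℕ) :
    Subsingleton (ext M N (p + 1)) ↔
      ∀ φ : P.complex.X (p + 1) ⟶ N, P.complex.d (p + 2) (p + 1) ≫ φ = 0 →
        ∃ ψ : P.complex.X p ⟶ N, P.complex.d (p + 1) p ≫ ψ = φ := by
  rw [← ModuleCat.isZero_iff_subsingleton, (P.isoExt (R := ℤ) (p + 1) N).isZero_iff,
    ← HomologicalComplex.exactAt_iff_isZero_homology,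
    HomologicalComplex.exactAt_iff' _ p (p + 1) (p + 2) (by simp) (by simp),
    ShortComplex.moduleCat_exact_iff]
  rfl

theorem pdLE_iff_hasProjectiveDimensionLE {M : ModuleCat.{u} B} {n : ℕ} :
    pdLE M n ↔ HasProjectiveDimensionLE M n := by
  let P := projectiveResolution M
  rw [HasProjectiveDimensionLE, hasProjectiveDimensionLT_iff.{u}]
  constructor
  · rintro h (_ | p) hi N e
    · omega
    obtain ⟨φ, hφ, rfl⟩ := P.extMk_surjective e (p + 2) rfl
    rw [P.extMk_eq_zero_iff _ _ _ _ p rfl]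
    exact (subsingleton_ext_succ_iff P p).1 (h _ (by omega) N) φ hφ
  · rintro h (_ | p) hi N
    · omega
    rw [subsingleton_ext_succ_iff P]
    intro φ hφ
    rw [← P.extMk_eq_zero_iff _ (p + 2) rfl hφ p rfl]
    exact h _ (by omega) _

theorem pdLE.mono {M : ModuleCat.{u} B} {m n : ℕ} (h : pdLE M m) (hmn : m ≤ n) : pdLE M n :=
  fun i hi N => h i (hmn.trans_lt hi) N

theorem projDim_le_iff {M : ModuleCat.{u} B} {n : ℕ} : projDim M ≤ n ↔ pdLE M n := by
  refine ⟨fun h => ?_, fun h => sInf_le ⟨n, rfl, h⟩⟩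
  have hlt : projDim M < (n + 1 : ℕ) := h.trans_lt (Nat.cast_lt.2 n.lt_succ_self)
  obtain ⟨_, ⟨m, rfl, hm⟩, hmn⟩ := sInf_lt_iff.1 hlt
  exact hm.mono (Nat.lt_succ_iff.1 (Nat.cast_lt.1 hmn))

theorem pdLE_of_projective (M : ModuleCat.{u} B) [Projective M] (n : ℕ) : pdLE M n :=
  pdLE.mono (pdLE_iff_hasProjectiveDimensionLE.2 <|
    (projective_iff_hasProjectiveDimensionLE_zero M).1 inferInstance) n.zero_le

theorem IsSummand.pdLE {M N : ModuleCat.{u} B} {n : ℕ} (h : IsSummand M N) (hN : pdLE N n) :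
    pdLE M n := by
  obtain ⟨s, r, hrs⟩ := h
  rw [pdLE_iff_hasProjectiveDimensionLE] at hN ⊢
  have : Retract M N := ⟨ModuleCat.ofHom s, ModuleCat.ofHom r, by
    rw [← ModuleCat.ofHom_comp, hrs, ModuleCat.ofHom_id]⟩
  exact this.hasProjectiveDimensionLT _

theorem IsSummand.inP {M N : ModuleCat.{u} B} (h : IsSummand M N) (hN : InP N) : InP M := by
  obtain ⟨hfin, n, hn⟩ := hN
  obtain ⟨s, r, hrs⟩ := id h
  exact ⟨.of_surjective r (LinearMap.surjective_of_comp_eq_id s r hrs), n, h.pdLE hn⟩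

section ShortExact

variable {S : ShortComplex (ModuleCat.{u} B)} {n : ℕ}

theorem pdLE_X₁_of_shortExact (hS : S.ShortExact) (h₂ : pdLE S.X₂ n) (h₃ : pdLE S.X₃ (n + 1)) :
    pdLE S.X₁ n := by
  rw [pdLE_iff_hasProjectiveDimensionLE] at *
  exact hS.hasProjectiveDimensionLT_X₁ _ h₂ h₃

theorem pdLE_X₂_of_shortExact (hS : S.ShortExact) (h₁ : pdLE S.X₁ n) (h₃ : pdLE S.X₃ n) :
    pdLE S.X₂ n := by
  rw [pdLE_iff_hasProjectiveDimensionLE] at *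
  exact hS.hasProjectiveDimensionLT_X₂ _ h₁ h₃

theorem pdLE_X₃_of_shortExact (hS : S.ShortExact) (h₁ : pdLE S.X₁ n) (h₂ : pdLE S.X₂ (n + 1)) :
    pdLE S.X₃ (n + 1) := by
  rw [pdLE_iff_hasProjectiveDimensionLE] at *
  exact hS.hasProjectiveDimensionLT_X₃ _ h₁ h₂

theorem inP_X₃_of_shortExact (hS : S.ShortExact) (h₁ : InP S.X₁) (h₂ : InP S.X₂) : InP S.X₃ := by
  obtain ⟨_, m, hm⟩ := h₁
  obtain ⟨_, k, hk⟩ := h₂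
  exact ⟨.of_surjective S.g.hom hS.moduleCat_surjective_g, max m k + 1,
    pdLE_X₃_of_shortExact hS (hm.mono (le_max_left m k)) (hk.mono (by omega))⟩

end ShortExact

/-- The finitely generated modules of projective dimension at most `n`. -/
def FinitePdLE (n : ℕ) : ObjectProperty (ModuleCat.{u} B) :=
  fun M => Module.Finite B M ∧ pdLE M n

theorem FinitePdLE.inP {M : ModuleCat.{u} B} {n : ℕ} (hM : FinitePdLE n M) : InP M :=
  ⟨hM.1, n, hM.2⟩

instance (n : ℕ) : (FinitePdLE (B := B) n).IsClosedUnderExtensions where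
  prop_X₂_of_shortExact hS h₁ h₃ :=
    have := h₁.1
    have := h₃.1
    ⟨.of_exact (ShortComplex.ShortExact.moduleCat_exact_iff_function_exact _ |>.1 hS.exact)
      hS.moduleCat_surjective_g, pdLE_X₂_of_shortExact hS h₁.2 h₃.2⟩

instance (n : ℕ) : (FinitePdLE (B := B) n).ContainsZero where
  exists_zero :=
    have hzero := ModuleCat.isZero_of_subsingleton (.of B PUnit.{u + 1})
    have := hzero.projective
    ⟨_, hzero, inferInstanceAs (Module.Finite B PUnit.{u + 1}), pdLE_of_projective _ n⟩

instance : ObjectProperty.IsClosedUnderExtensions (InP (A := B)) where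
  prop_X₂_of_shortExact hS := fun ⟨hfin₁, m, hm⟩ ⟨hfin₃, k, hk⟩ =>
    FinitePdLE.inP <| (FinitePdLE (max m k)).prop_X₂_of_shortExact hS
      ⟨hfin₁, hm.mono (le_max_left m k)⟩ ⟨hfin₃, hk.mono (le_max_right m k)⟩

theorem FinitePdLE.exists_syzygy [IsNoetherianRing B] {M : ModuleCat.{u} B} {n : ℕ}
    (hM : FinitePdLE n M) :
    ∃ S : ShortComplex (ModuleCat.{u} B),
      S.ShortExact ∧ Projective S.X₂ ∧ S.X₃ = M ∧ FinitePdLE n S.X₁ := by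
  have := hM.1
  obtain ⟨k, g, hg⟩ := Module.Finite.exists_fin' B M
  have hS := LinearMap.shortExact_shortComplexKer hg
  have hproj : Projective (ModuleCat.of B (Fin k → B)) :=
    (IsProjective.iff_projective (Fin k → B)).1 inferInstance
  exact ⟨_, hS, hproj, rfl, inferInstanceAs (Module.Finite B (LinearMap.ker g)),
    pdLE_X₁_of_shortExact hS (pdLE_of_projective _ n) (hM.2.mono n.le_succ)⟩

end ProjectiveDimension

section SpecialCovers

open Limits

variable {𝒞 : Type*} [Category 𝒞] [Abelian 𝒞] {P Q : ObjectProperty 𝒞}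

theorem shortExact_pushout {S : ShortComplex 𝒞} (hS : S.ShortExact) {X : 𝒞} (α : S.X₁ ⟶ X) :
    (ShortComplex.mk (pushout.inr S.f α) (pushout.desc S.g 0 (by rw [S.zero, comp_zero]))
      (pushout.inr_desc _ _ _)).ShortExact := by
  have := hS.mono_f
  have := hS.epi_g
  have w : S.f ≫ S.g = α ≫ 0 := by rw [S.zero, comp_zero]
  have : Epi (pushout.desc S.g 0 w) := epi_of_epi_fac (pushout.inl_desc S.g 0 w)
  refine { exact := ShortComplex.exact_of_g_is_cokernel _ ?_ }
  refine CokernelCofork.IsColimit.ofπ' _ _ fun k hk =>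
    ⟨hS.exact.desc (pushout.inl S.f α ≫ k) ?_, ?_⟩
  · rw [pushout.condition_assoc, hk, comp_zero]
  · refine pushout.hom_ext ?_ ?_
    · rw [pushout.inl_desc_assoc, hS.exact.g_desc]
    · rw [pushout.inr_desc_assoc, zero_comp, hk]

/-- `f` has the right lifting property against the syzygies of the objects in `P`. For `f`
epimorphic this says that `Ext¹(N, ker f) = 0` for all `N` in `P`, so that a morphism with this
property and source in `P` is a special `P`-precover. -/
def LiftsSyzygies (P : ObjectProperty 𝒞) {X C : 𝒞} (f : X ⟶ C) : Prop :=
  ∀ ⦃S : ShortComplex 𝒞⦄, S.ShortExact → Projective S.X₂ → P S.X₃ → HasLiftingProperty S.f f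

theorem LiftsSyzygies.exists_lift [EnoughProjectives 𝒞] {N X C : 𝒞} {f : X ⟶ C}
    (hf : LiftsSyzygies P f) (hN : P N) (h : N ⟶ C) : ∃ h' : N ⟶ X, h' ≫ f = h := by
  let S : ShortComplex 𝒞 := .mk (kernel.ι (Projective.π N)) (Projective.π N) (kernel.condition _)
  have hS : S.ShortExact :=
    { exact := ShortComplex.exact_of_f_is_kernel _ (kernelIsKernel _)
      mono_f := inferInstanceAs (Mono (kernel.ι _))
      epi_g := inferInstanceAs (Epi (Projective.π N)) }
  have := hS.epi_g
  have := hf hS inferInstance hN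
  have sq : CommSq (0 : S.X₁ ⟶ X) S.f f (S.g ≫ h) := ⟨by simp⟩
  refine ⟨hS.exact.desc sq.lift sq.fac_left, ?_⟩
  rw [← cancel_epi S.g, hS.exact.g_desc_assoc, sq.fac_right]

theorem LiftsSyzygies.comp_iso {X C D : 𝒞} {f : X ⟶ C} (hf : LiftsSyzygies P f) (e : C ≅ D) :
    LiftsSyzygies P (f ≫ e.hom) :=
  fun _ hS hproj h₃ => have := hf hS hproj h₃; inferInstance

theorem LiftsSyzygies.of_shortExact {X C : ShortComplex 𝒞} (hX : X.ShortExact)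
    (hC : C.ShortExact) (φ : X ⟶ C) (h₁ : LiftsSyzygies P φ.τ₁) (h₃ : LiftsSyzygies P φ.τ₃) :
    LiftsSyzygies P φ.τ₂ := by
  intro S hS hproj hP
  have := h₁ hS hproj hP
  have := h₃ hS hproj hP
  have := hX.mono_f
  have := hX.epi_g
  have := hC.mono_f
  refine ⟨fun {α β} sq => ?_⟩
  have sq₃ : CommSq (α ≫ X.g) S.f φ.τ₃ (β ≫ C.g) := ⟨by
    rw [Category.assoc, ← φ.comm₂₃, sq.w_assoc]⟩
  let χ : S.X₂ ⟶ X.X₂ := Projective.factorThru sq₃.lift X.g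
  have hχ : χ ≫ X.g = sq₃.lift := Projective.factorThru_comp _ _
  let α' : S.X₁ ⟶ X.X₁ := hX.exact.lift (α - S.f ≫ χ) (by
    rw [Preadditive.sub_comp, Category.assoc, hχ, sq₃.fac_left, sub_self])
  let β' : S.X₂ ⟶ C.X₁ := hC.exact.lift (β - χ ≫ φ.τ₂) (by
    rw [Preadditive.sub_comp, Category.assoc, φ.comm₂₃, reassoc_of% hχ, sq₃.fac_right, sub_self])
  have hα' : α' ≫ X.f = α - S.f ≫ χ := hX.exact.lift_f _ _
  have hβ' : β' ≫ C.f = β - χ ≫ φ.τ₂ := hC.exact.lift_f _ _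
  have sq₁ : CommSq α' S.f φ.τ₁ β' := ⟨by
    rw [← cancel_mono C.f, Category.assoc, φ.comm₁₂, reassoc_of% hα', Category.assoc, hβ',
      Preadditive.sub_comp, Preadditive.comp_sub, sq.w, Category.assoc]⟩
  refine ⟨⟨⟨sq₁.lift ≫ X.f + χ, ?_, ?_⟩⟩⟩
  · rw [Preadditive.comp_add, sq₁.fac_left_assoc, hα', sub_add_cancel]
  · rw [Preadditive.add_comp, Category.assoc, ← φ.comm₁₂, sq₁.fac_right_assoc, hβ',
      sub_add_cancel]

/-- `C` is the target of a morphism with source in `Q` that lifts the syzygies of the objects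
in `P`. -/
def HasSpecialCover (P Q : ObjectProperty 𝒞) : ObjectProperty 𝒞 :=
  fun C => ∃ (X : 𝒞) (f : X ⟶ C), Q X ∧ LiftsSyzygies P f

instance : (HasSpecialCover P Q).IsClosedUnderIsomorphisms where
  of_iso e := fun ⟨X, f, hX, hf⟩ => ⟨X, f ≫ e.hom, hX, hf.comp_iso e⟩

instance [Q.ContainsZero] : (HasSpecialCover P Q).ContainsZero where
  exists_zero := by
    obtain ⟨Z, hZ, hQ⟩ := Q.exists_prop_of_containsZero
    exact ⟨Z, hZ, Z, 𝟙 Z, hQ, fun _ _ _ _ => inferInstance⟩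

theorem HasSpecialCover.isClosedUnderExtensions [EnoughProjectives 𝒞] [Q.IsClosedUnderExtensions]
    (hPQ : ∀ X, Q X → ∃ S : ShortComplex 𝒞, S.ShortExact ∧ Projective S.X₂ ∧ S.X₃ = X ∧ P S.X₁) :
    (HasSpecialCover P Q).IsClosedUnderExtensions where
  prop_X₂_of_shortExact := by
    rintro C hC ⟨X₁, f₁, hX₁, hf₁⟩ ⟨X₃, f₃, hX₃, hf₃⟩
    obtain ⟨S, hS, hproj, rfl, hS₁⟩ := hPQ X₃ hX₃
    have := hC.mono_f
    have := hC.epi_g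
    let φ : S.X₂ ⟶ C.X₂ := Projective.factorThru (S.g ≫ f₃) C.g
    have hφ : φ ≫ C.g = S.g ≫ f₃ := Projective.factorThru_comp _ _
    have hφ₀ : (S.f ≫ φ) ≫ C.g = 0 := by rw [Category.assoc, hφ, S.zero_assoc, zero_comp]
    obtain ⟨α, hα⟩ := hf₁.exists_lift hS₁ (hC.exact.lift (S.f ≫ φ) hφ₀)
    have hX := shortExact_pushout hS α
    have hαφ : S.f ≫ φ = α ≫ f₁ ≫ C.f := by rw [reassoc_of% hα, hC.exact.lift_f]
    refine ⟨_, pushout.desc φ (f₁ ≫ C.f) hαφ,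
      Q.prop_X₂_of_shortExact hX hX₁ hX₃, LiftsSyzygies.of_shortExact hX hC
      ⟨f₁, pushout.desc φ (f₁ ≫ C.f) hαφ, f₃, (pushout.inr_desc _ _ _).symm, ?_⟩ hf₁ hf₃⟩
    refine pushout.hom_ext ?_ ?_
    · rw [pushout.inl_desc_assoc, hφ, pushout.inl_desc_assoc]
    · rw [pushout.inr_desc_assoc, Category.assoc, C.zero, comp_zero, pushout.inr_desc_assoc,
        zero_comp]

end SpecialCovers

section RightApproximations

open Limits

variable {B : Type u} [Ring B] {𝒳 : ObjectProperty (ModuleCat.{u} B)}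
  {X M : ModuleCat.{u} B} {f : X →ₗ[B] M}

theorem IsRightApprox.comp_of_leftInverse {N : ModuleCat.{u} B} (hf : IsRightApprox 𝒳 f)
    {s : N →ₗ[B] M} {r : M →ₗ[B] N} (hrs : r ∘ₗ s = LinearMap.id) : IsRightApprox 𝒳 (r ∘ₗ f) := by
  refine ⟨hf.1, fun Y hY g => ?_⟩
  obtain ⟨h, hh⟩ := hf.2 Y hY (s ∘ₗ g)
  exact ⟨h, by rw [LinearMap.comp_assoc, hh, ← LinearMap.comp_assoc, hrs, LinearMap.id_comp]⟩

theorem IsRightApprox.comp_subtype_range (hf : IsRightApprox 𝒳 f) {e : X →ₗ[B] X}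
    (he : f ∘ₗ e = f) (hrange : 𝒳 (.of B (LinearMap.range e))) :
    IsRightApprox 𝒳 (XM := .of B (LinearMap.range e)) (f ∘ₗ (LinearMap.range e).subtype) := by
  refine ⟨hrange, fun Y hY g => ?_⟩
  obtain ⟨h, hh⟩ := hf.2 Y hY g
  exact ⟨e.rangeRestrict ∘ₗ h, (congrArg (· ∘ₗ h) he).trans hh⟩

theorem exists_minimal_range [IsArtinian B X] (f : X →ₗ[B] M) :
    ∃ e : X →ₗ[B] X, f ∘ₗ e = f ∧ ∀ e' : X →ₗ[B] X, f ∘ₗ e' = f →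
      LinearMap.range e' ≤ LinearMap.range e → LinearMap.range e' = LinearMap.range e := by
  obtain ⟨_, ⟨e, he, rfl⟩, hmin⟩ := IsArtinian.set_has_minimal
    (LinearMap.range '' {e : X →ₗ[B] X | f ∘ₗ e = f}) ⟨_, LinearMap.id, f.comp_id, rfl⟩
  exact ⟨e, he, fun e' he' hle => hle.eq_of_not_lt (hmin _ ⟨e', he', rfl⟩)⟩

theorem IsRightApprox.exists_isMinimalRightApprox [IsNoetherian B X] [IsArtinian B X]
    (h𝒳 : ∀ ⦃Y Z⦄, IsSummand Y Z → 𝒳 Z → 𝒳 Y) (hf : IsRightApprox 𝒳 f) :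
    ∃ (Y : ModuleCat.{u} B) (g : Y →ₗ[B] M), IsSummand Y X ∧ IsMinimalRightApprox 𝒳 g := by
  obtain ⟨e, he, hmin⟩ := exists_minimal_range f
  have hbij (g : LinearMap.range e →ₗ[B] LinearMap.range e)
      (hg : (f ∘ₗ (LinearMap.range e).subtype) ∘ₗ g = f ∘ₗ (LinearMap.range e).subtype) :
      Function.Bijective g := by
    refine IsNoetherian.bijective_of_surjective_endomorphism g ?_
    have hrange := hmin ((LinearMap.range e).subtype ∘ₗ g ∘ₗ e.rangeRestrict)
      ((congrArg (· ∘ₗ e.rangeRestrict) hg).trans he)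
      ((LinearMap.range_comp_le_range _ _).trans (Submodule.range_subtype _).le)
    rintro ⟨v, hv⟩
    obtain ⟨x, hx⟩ := hrange.ge hv
    exact ⟨e.rangeRestrict x, Subtype.ext hx⟩
  let e' := LinearEquiv.ofBijective _ <|
    hbij (e.rangeRestrict ∘ₗ (LinearMap.range e).subtype) (congrArg (· ∘ₗ Submodule.subtype _) he)
  have hsummand : IsSummand (.of B (LinearMap.range e)) X :=
    ⟨(LinearMap.range e).subtype, e'.symm ∘ₗ e.rangeRestrict,
      LinearMap.ext e'.symm_apply_apply⟩
  exact ⟨_, _, hsummand, hf.comp_subtype_range he (h𝒳 hsummand hf.1), hbij⟩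

/-- Wakamatsu's lemma. -/
theorem IsMinimalRightApprox.liftsSyzygies [𝒳.IsClosedUnderExtensions]
    (hf : IsMinimalRightApprox 𝒳 f) : LiftsSyzygies 𝒳 (ModuleCat.ofHom f) := by
  refine fun S hS _ hS₃ => ⟨fun {α β} sq => ?_⟩
  let v : pushout S.f α ⟶ M := pushout.desc β (ModuleCat.ofHom f) sq.w.symm
  obtain ⟨u, hu⟩ := hf.1.2 _ (𝒳.prop_X₂_of_shortExact (shortExact_pushout hS α) hf.1.1 hS₃) v.hom
  have huf : ModuleCat.ofHom u ≫ ModuleCat.ofHom f = v := by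
    rw [← ModuleCat.ofHom_comp, hu, ModuleCat.ofHom_hom]
  let e : X ⟶ X := pushout.inr S.f α ≫ ModuleCat.ofHom u
  have hef : e ≫ ModuleCat.ofHom f = ModuleCat.ofHom f := by
    rw [Category.assoc, huf, pushout.inr_desc]
  have : IsIso e := (ConcreteCategory.isIso_iff_bijective e).2 <|
    hf.2 e.hom (congrArg ModuleCat.Hom.hom hef)
  refine ⟨⟨⟨pushout.inl S.f α ≫ ModuleCat.ofHom u ≫ inv e, ?_, ?_⟩⟩⟩
  · rw [pushout.condition_assoc, ← Category.assoc (pushout.inr S.f α), IsIso.hom_inv_id,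
      Category.comp_id]
  · rw [Category.assoc, Category.assoc, (IsIso.inv_comp_eq e).2 hef.symm, huf, pushout.inl_desc]

theorem IsRightApprox.hasSpecialCover [IsArtinianRing B] {f : X →ₗ[B] M} {n : ℕ}
    (hf : IsRightApprox InP f) (hX : pdLE X n) : HasSpecialCover InP (FinitePdLE n) M := by
  have := hf.1.1
  obtain ⟨Y, g, hYX, hg⟩ := hf.exists_isMinimalRightApprox fun _ _ => IsSummand.inP
  exact ⟨Y, ModuleCat.ofHom g, ⟨hg.1.1.1, hYX.pdLE hX⟩, hg.liftsSyzygies⟩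

end RightApproximations

section FiniteLength

variable {B : Type u} [Ring B]

instance [IsNoetherianRing B] (n : ℕ) :
    (HasSpecialCover (InP (A := B)) (FinitePdLE n)).IsClosedUnderExtensions :=
  HasSpecialCover.isClosedUnderExtensions fun _ hX =>
    have ⟨S, hS, hproj, hX₃, hX₁⟩ := hX.exists_syzygy
    ⟨S, hS, hproj, hX₃, hX₁.inP⟩

theorem prop_of_surjective (Q : ObjectProperty (ModuleCat.{u} B)) [Q.IsClosedUnderExtensions]
    {M N : Type u} [AddCommGroup M] [Module B M] [AddCommGroup N] [Module B N] {g : M →ₗ[B] N}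
    (hg : Function.Surjective g) (hker : Q (.of B (LinearMap.ker g))) (hN : Q (.of B N)) :
    Q (.of B M) :=
  Q.prop_X₂_of_shortExact (LinearMap.shortExact_shortComplexKer hg) hker hN

theorem prop_of_isFiniteLength (Q : ObjectProperty (ModuleCat.{u} B))
    [Q.IsClosedUnderIsomorphisms] [Q.ContainsZero] [Q.IsClosedUnderExtensions]
    (hQ : ∀ S : ModuleCat.{u} B, IsSimpleModule B S → Q S) {M : Type u} [AddCommGroup M]
    [Module B M] (hM : IsFiniteLength B M) : Q (.of B M) := by
  induction hM with
  | of_subsingleton => exact Q.prop_of_isZero (ModuleCat.isZero_of_subsingleton _)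
  | @of_simple_quotient M _ _ N hN _ ih =>
    exact prop_of_surjective Q N.mkQ_surjective (by rwa [Submodule.ker_mkQ]) (hQ _ hN)

theorem IsSummand.trans {L M N : ModuleCat.{u} B} (h : IsSummand L M) (h' : IsSummand M N) :
    IsSummand L N := by
  obtain ⟨s, r, hrs⟩ := h
  obtain ⟨s', r', hrs'⟩ := h'
  refine ⟨s' ∘ₗ s, r ∘ₗ r', LinearMap.ext fun x => ?_⟩
  exact (congrArg r (LinearMap.congr_fun hrs' (s x))).trans (LinearMap.congr_fun hrs x)

theorem isSummand_range_of_idempotent {E : ModuleCat.{u} B} {e : E →ₗ[B] E} (he : e ∘ₗ e = e) :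
    IsSummand (.of B (LinearMap.range e)) E := by
  refine ⟨(LinearMap.range e).subtype, e.rangeRestrict, LinearMap.ext ?_⟩
  rintro ⟨_, x, rfl⟩
  exact Subtype.ext (LinearMap.congr_fun he x)

theorem isSummand_ker_of_idempotent {E : ModuleCat.{u} B} {e : E →ₗ[B] E} (he : e ∘ₗ e = e) :
    IsSummand (.of B (LinearMap.ker e)) E := by
  have hmem (x : E) : x - e x ∈ LinearMap.ker e :=
    (map_sub e x (e x)).trans (sub_eq_zero.2 (LinearMap.congr_fun he x).symm)
  exact ⟨(LinearMap.ker e).subtype, (LinearMap.id - e).codRestrict (LinearMap.ker e) hmem,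
    LinearMap.ext fun x => Subtype.ext (sub_eq_self.2 x.2)⟩

theorem prop_of_forall_indec_isSummand (Q : ObjectProperty (ModuleCat.{u} B))
    [Q.IsClosedUnderIsomorphisms] [Q.ContainsZero] [Q.IsClosedUnderExtensions]
    (E : ModuleCat.{u} B) [IsNoetherian B E] [IsArtinian B E]
    (hQ : ∀ S : ModuleCat.{u} B, IsSummand S E → Indec S → Q S) : Q E := by
  induction hl : Module.length B E using WellFoundedLT.induction generalizing E with
  | ind l ih =>
    by_cases hE : Subsingleton E
    · exact Q.prop_of_isZero (ModuleCat.isZero_of_subsingleton E)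
    by_cases hind : Indec E
    · exact hQ E ⟨.id, .id, rfl⟩ hind
    obtain ⟨e, he, he₀, he₁⟩ : ∃ e : E →ₗ[B] E, e ∘ₗ e = e ∧ e ≠ 0 ∧ e ≠ LinearMap.id := by
      simpa only [Indec, hE, not_false_eq_true, true_and, not_forall, not_or, exists_prop]
        using hind
    have hker : LinearMap.ker e ≠ ⊤ := fun h => he₀ (LinearMap.ker_eq_top.1 h)
    have hrange : LinearMap.range e ≠ ⊤ := fun h => he₁ <|
      (LinearMap.cancel_right (LinearMap.range_eq_top.1 h)).1 (he.trans (e.id_comp).symm)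
    refine prop_of_surjective Q e.surjective_rangeRestrict ?_ ?_
    · rw [LinearMap.ker_rangeRestrict]
      exact ih _ (hl ▸ Submodule.length_lt hker) (.of B (LinearMap.ker e))
        (fun S hS => hQ S (hS.trans (isSummand_ker_of_idempotent he))) rfl
    · exact ih _ (hl ▸ Submodule.length_lt hrange) (.of B (LinearMap.range e))
        (fun S hS => hQ S (hS.trans (isSummand_range_of_idempotent he))) rfl

instance isSemisimpleModule_quotient_jacobson [IsArtinianRing B] :
    IsSemisimpleModule B (B ⧸ Ring.jacobson B) :=
  (IsArtinian.isSemisimpleModule_iff_jacobson B _).2 (Module.jacobson_quotient_jacobson B B)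

theorem isSummand_quotient_jacobson_of_isSimpleModule [IsArtinianRing B] (S : ModuleCat.{u} B)
    [IsSimpleModule B S] : IsSummand S (.of B (B ⧸ Ring.jacobson B)) := by
  obtain ⟨x, hx⟩ := have := IsSimpleModule.nontrivial B S; exists_ne (0 : S)
  have hle : Ring.jacobson B ≤ LinearMap.ker (LinearMap.toSpanSingleton B S x) := fun a ha =>
    Module.mem_annihilator.1 (IsSemisimpleModule.jacobson_le_annihilator B S ha) x
  let p := (Ring.jacobson B).liftQ (LinearMap.toSpanSingleton B S x) hle
  have hp : Function.Surjective p :=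
    .of_comp (g := (Ring.jacobson B).mkQ) (IsSimpleModule.toSpanSingleton_surjective B hx)
  obtain ⟨s, hs⟩ := IsSemisimpleModule.lifting_property p hp LinearMap.id
  exact ⟨s, p, hs⟩

theorem ContravariantlyFinite.exists_forall_hasSpecialCover [IsArtinianRing B]
    (hcf : ContravariantlyFinite (InP (A := B))) :
    ∃ n, ∀ M : ModuleCat.{u} B, Module.Finite B M → HasSpecialCover InP (FinitePdLE n) M := by
  obtain ⟨X, f, hf⟩ := hcf (.of B (B ⧸ Ring.jacobson B))
    (inferInstanceAs (Module.Finite B (B ⧸ Ring.jacobson B)))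
  obtain ⟨n, hn⟩ := hf.1.2
  refine ⟨n, fun M _ => prop_of_isFiniteLength _ (fun S _ => ?_)
    (isFiniteLength_iff_isNoetherian_isArtinian.2 ⟨inferInstance, inferInstance⟩)⟩
  obtain ⟨s, r, hrs⟩ := isSummand_quotient_jacobson_of_isSimpleModule S
  exact (hf.comp_of_leftInverse hrs).hasSpecialCover hn

theorem HasSpecialCover.isSummand {P Q : ObjectProperty (ModuleCat.{u} B)} {M : ModuleCat.{u} B}
    (hM : HasSpecialCover P Q M) (hP : P M) : ∃ X, Q X ∧ IsSummand M X := by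
  obtain ⟨X, f, hX, hf⟩ := hM
  obtain ⟨s, hs⟩ := hf.exists_lift hP (𝟙 M)
  exact ⟨X, hX, s.hom, f.hom, congrArg ModuleCat.Hom.hom hs⟩

theorem ContravariantlyFinite.exists_forall_pdLE [IsArtinianRing B]
    (hcf : ContravariantlyFinite (InP (A := B))) :
    ∃ n, ∀ M : ModuleCat.{u} B, InP M → pdLE M n := by
  obtain ⟨n, hn⟩ := hcf.exists_forall_hasSpecialCover
  refine ⟨n, fun M hM => ?_⟩
  obtain ⟨X, hX, hMX⟩ := (hn M hM.1).isSummand hM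
  exact hMX.pdLE hX.2

end FiniteLength

section EssentialExtensions

/-- `E` is an essential extension of `M`: every nonzero element of the lattice below `E` meets
`M`. For lattices of submodules this is the usual notion. -/
def IsEssentialExtension {α : Type*} [Lattice α] [OrderBot α] (M E : α) : Prop :=
  M ≤ E ∧ ∀ D ≤ E, Disjoint D M → D = ⊥

theorem IsEssentialExtension.trans {α : Type*} [Lattice α] [OrderBot α] {L M N : α}
    (h : IsEssentialExtension L M) (h' : IsEssentialExtension M N) : IsEssentialExtension L N :=
  ⟨h.1.trans h'.1, fun D hD hDL => h'.2 D hD <| disjoint_iff.2 <|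
    h.2 (D ⊓ M) inf_le_right (hDL.mono_left inf_le_left)⟩

theorem IsEssentialExtension.le_of_complementedLattice {α : Type*} [Lattice α] [OrderBot α]
    {M E T : α} (h : IsEssentialExtension M E) (hT : T ≤ E) [ComplementedLattice (Set.Iic T)] :
    T ≤ M := by
  obtain ⟨D, hD⟩ := exists_isCompl (⟨M ⊓ T, inf_le_right⟩ : Set.Iic T)
  have hDM : Disjoint (D : α) M := disjoint_iff_inf_le.2 <|
    (le_inf inf_le_left (le_inf inf_le_right (inf_le_left.trans D.2))).trans <|
      Subtype.coe_le_coe.2 (disjoint_iff_inf_le.1 hD.symm.disjoint)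
  have hbot : D = ⊥ := Subtype.ext (h.2 D (D.2.trans hT) hDM)
  rw [hbot] at hD
  exact inf_eq_right.1 (congrArg Subtype.val (eq_top_of_isCompl_bot hD))

section CompactlyGenerated

variable {α : Type*} [CompleteLattice α] [IsCompactlyGenerated α]

theorem exists_maximal_isEssentialExtension (M : α) :
    ∃ E, Maximal (IsEssentialExtension M) E := by
  have hM : IsEssentialExtension M M := ⟨le_rfl, fun D hD hDM => hDM.eq_bot_of_le hD⟩
  have hsSup (c : Set α) (hc : ∀ E ∈ c, IsEssentialExtension M E) (hchain : IsChain (· ≤ ·) c)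
      (E : α) (hE : E ∈ c) : IsEssentialExtension M (sSup c) := by
    refine ⟨(hc E hE).1.trans (le_sSup hE), fun D hD hDM => ?_⟩
    have hdisj : Disjoint D (sSup c) := hchain.directedOn.disjoint_sSup_right.2 fun F hF =>
      disjoint_iff.2 ((hc F hF).2 _ inf_le_right (hDM.mono_left inf_le_left))
    exact hdisj.eq_bot_of_le hD
  exact (zorn_le_nonempty₀ {E | IsEssentialExtension M E}
    (fun c hc hchain E hE => ⟨sSup c, hsSup c hc hchain E hE, fun _ => le_sSup⟩) M hM).imp
    fun _ => And.right

theorem exists_maximal_disjoint (E : α) : ∃ C, Maximal (Disjoint · E) C :=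
  zorn_le₀ {C : α | Disjoint C E} fun c hc hchain =>
    ⟨sSup c, hchain.directedOn.disjoint_sSup_left.2 fun _ hF => hc hF, fun _ => le_sSup⟩

end CompactlyGenerated

variable {B : Type u} [Ring B]

theorem isEssentialExtension_range {Q : Type*} [AddCommGroup Q] [Module B Q] {C E : Submodule B Q}
    (hC : Maximal (Disjoint · E) C) {ρ : Q →ₗ[B] Q} (hρC : C ≤ LinearMap.ker ρ)
    (hρE : ∀ x ∈ E, ρ x = x) : IsEssentialExtension E (LinearMap.range ρ) := by
  refine ⟨fun x hx => ⟨x, hρE x hx⟩, fun D hD hDE => ?_⟩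
  have hdisj : Disjoint (D.comap ρ) E := Submodule.disjoint_def.2 fun x hxD hxE =>
    Submodule.disjoint_def.1 hDE x (hρE x hxE ▸ hxD) hxE
  have hle : D.comap ρ ≤ LinearMap.ker ρ :=
    (hC.2 hdisj (hρC.trans (Submodule.comap_mono bot_le))).trans hρC
  rw [← Submodule.map_comap_eq_of_le hD, ← LinearMap.le_ker_iff_map]
  exact hle

theorem exists_retraction_of_maximal_isEssentialExtension {Q : Type u} [AddCommGroup Q]
    [Module B Q] [Module.Injective B Q] {M E : Submodule B Q}
    (hE : Maximal (IsEssentialExtension M) E) :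
    ∃ r : Q →ₗ[B] E, r ∘ₗ E.subtype = LinearMap.id := by
  obtain ⟨C, hC⟩ := exists_maximal_disjoint E
  have hinj : Function.Injective (C.mkQ ∘ₗ E.subtype) := by
    rw [← LinearMap.ker_eq_bot, LinearMap.ker_comp, Submodule.ker_mkQ,
      ← Submodule.disjoint_iff_comap_eq_bot]
    exact hC.1.symm
  obtain ⟨θ, hθ⟩ := Module.Injective.out (C.mkQ ∘ₗ E.subtype) hinj E.subtype
  have hess := isEssentialExtension_range hC (ρ := θ ∘ₗ C.mkQ)
    (C.ker_mkQ.ge.trans (LinearMap.ker_le_ker_comp _ _)) fun x hx => hθ ⟨x, hx⟩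
  have hrange : LinearMap.range (θ ∘ₗ C.mkQ) ≤ E := hE.2 (hE.1.trans hess) hess.1
  exact ⟨(θ ∘ₗ C.mkQ).codRestrict E fun x => hrange ⟨x, rfl⟩,
    LinearMap.ext fun x => Subtype.ext (hθ x)⟩

theorem IsSummand.injective {E Q : ModuleCat.{u} B} [Module.Injective B Q] (h : IsSummand E Q) :
    Module.Injective B E where
  out X Y _ _ _ _ f hf g := by
    obtain ⟨s, r, hrs⟩ := h
    obtain ⟨k, hk⟩ := Module.Injective.out f hf (s ∘ₗ g)
    exact ⟨r ∘ₗ k, fun x => (congrArg r (hk x)).trans (LinearMap.congr_fun hrs (g x))⟩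

theorem isSemisimpleModule_span_singleton [IsArtinianRing B] {E : Type*} [AddCommGroup E]
    [Module B E] {x : E} (hx : ∀ a ∈ Ring.jacobson B, a • x = 0) :
    IsSemisimpleModule B (Submodule.span B {x}) := by
  rw [← LinearMap.range_toSpanSingleton,
    ← Submodule.range_liftQ (Ring.jacobson B) (LinearMap.toSpanSingleton B E x) hx]
  exact .range _

theorem IsEssentialExtension.mem_of_jacobson_smul_eq_zero [IsArtinianRing B] {Q : Type*}
    [AddCommGroup Q] [Module B Q] {M E : Submodule B Q} (h : IsEssentialExtension M E) {x : Q}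
    (hxE : x ∈ E) (hx : ∀ a ∈ Ring.jacobson B, a • x = 0) : x ∈ M := by
  have := isSemisimpleModule_span_singleton hx
  have := (Submodule.mapIic (Submodule.span B {x})).complementedLattice
  exact h.le_of_complementedLattice ((Submodule.span_singleton_le_iff_mem x E).2 hxE)
    (Submodule.mem_span_singleton_self x)

end EssentialExtensions

section ArtinAlgebras

variable (R : Type*) [CommRing R] {B : Type u} [Ring B] [Algebra R B]

section Annihilated

variable (E : Type*) [AddCommGroup E] [Module R E] [Module B E] [IsScalarTower R B E]

/-- The elements of `E` annihilated by the left ideal `J`, regarded as a module over the base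
ring `R` because they need not form a `B`-submodule. -/
def annihilatedBy (J : Ideal B) : Submodule R E where
  carrier := {x | ∀ a ∈ J, a • x = 0}
  add_mem' hx hy a ha := by rw [smul_add, hx a ha, hy a ha, add_zero]
  zero_mem' a _ := smul_zero a
  smul_mem' r x hx a ha := by
    have := IsScalarTower.to_smulCommClass' (R := R) (A := B) (M := E)
    rw [smul_comm, hx a ha, smul_zero]

variable {E}

/-- Sends `x` to the multiplication map `a ↦ a • x`. -/
def annihilatedBy.smulHom (I J : Ideal B) :
    annihilatedBy R E (I * J) →ₗ[R] J.restrictScalars R →ₗ[R] annihilatedBy R E I :=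
  have := IsScalarTower.to_smulCommClass' (R := R) (A := B) (M := E)
  LinearMap.mk₂ R (fun x a => ⟨(a : B) • (x : E), fun b hb => by
      rw [smul_smul]
      exact x.2 _ (Ideal.mul_mem_mul hb a.2)⟩)
    (fun _ _ _ => Subtype.ext (smul_add _ _ _))
    (fun _ _ _ => Subtype.ext (smul_comm _ _ _))
    (fun _ _ _ => Subtype.ext (add_smul _ _ _))
    (fun _ _ _ => Subtype.ext (smul_assoc _ _ _))

theorem isNoetherian_annihilatedBy_mul [IsNoetherianRing R] [Module.Finite R B] (I J : Ideal B)
    [IsNoetherian R (annihilatedBy R E I)] [IsNoetherian R (annihilatedBy R E J)] :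
    IsNoetherian R (annihilatedBy R E (I * J)) := by
  have hker (x : LinearMap.ker (annihilatedBy.smulHom R (E := E) I J)) :
      (x : E) ∈ annihilatedBy R E J := fun a ha =>
    congrArg Subtype.val (LinearMap.congr_fun x.2 ⟨a, ha⟩)
  have : IsNoetherian R (LinearMap.ker (annihilatedBy.smulHom R (E := E) I J)) :=
    isNoetherian_of_injective
      (((annihilatedBy R E (I * J)).subtype ∘ₗ Submodule.subtype _).codRestrict _ hker)
      fun x y h => Subtype.ext (Subtype.ext (Subtype.ext_iff.1 h :))
  exact isNoetherian_of_range_eq_ker (Submodule.subtype _) (annihilatedBy.smulHom R I J)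
    (Submodule.range_subtype _)

theorem isNoetherian_annihilatedBy_pow [IsNoetherianRing R] [Module.Finite R B] (J : Ideal B)
    [IsNoetherian R (annihilatedBy R E J)] (k : ℕ) :
    IsNoetherian R (annihilatedBy R E (J ^ k)) := by
  induction k with
  | zero =>
    have hbot : annihilatedBy R E (J ^ 0) = ⊥ := (Submodule.eq_bot_iff _).2 fun x hx => by
      rw [← one_smul B x]
      exact hx 1 (by rw [Submodule.pow_zero, Ideal.one_eq_top]; trivial)
    rw [hbot]
    infer_instance
  | succ k ih =>
    rw [Submodule.pow_succ]
    exact isNoetherian_annihilatedBy_mul R _ _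

theorem isNoetherian_of_isNilpotent [IsNoetherianRing R] [Module.Finite R B] {J : Ideal B}
    (hJ : IsNilpotent J) [IsNoetherian R (annihilatedBy R E J)] : IsNoetherian R E := by
  obtain ⟨k, hk⟩ := hJ
  have htop : annihilatedBy R E (J ^ k) = ⊤ := eq_top_iff.2 fun x _ a ha => by
    rw [hk] at ha
    rw [show a = 0 from ha, zero_smul]
  exact isNoetherian_top_iff.1 (htop ▸ isNoetherian_annihilatedBy_pow R J k)

end Annihilated

theorem IsEssentialExtension.isNoetherian [IsArtinianRing R] [Module.Finite R B] {Q : Type*}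
    [AddCommGroup Q] [Module R Q] [Module B Q] [IsScalarTower R B Q] {M E : Submodule B Q}
    (h : IsEssentialExtension M E) [IsNoetherian R M] : IsNoetherian R E := by
  have : IsArtinianRing B := .of_finite R B
  have hsoc (x : annihilatedBy R E (Ring.jacobson B)) : (x : Q) ∈ M :=
    h.mem_of_jacobson_smul_eq_zero (x : E).2 fun a ha => congrArg Subtype.val (x.2 a ha)
  have : IsNoetherian R (M.restrictScalars R) := inferInstanceAs (IsNoetherian R M)
  have : IsNoetherian R (annihilatedBy R E (Ring.jacobson B)) :=
    isNoetherian_of_injective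
      ((E.subtype.restrictScalars R ∘ₗ Submodule.subtype _).codRestrict
        (M.restrictScalars R) hsoc)
      fun x y h => Subtype.ext (Subtype.ext (Subtype.ext_iff.1 h :))
  exact isNoetherian_of_isNilpotent R (IsSemiprimaryRing.isNilpotent (R := B))

theorem exists_finite_injective [IsArtinianRing R] [Module.Finite R B] (M : ModuleCat.{u} B)
    [Module.Finite B M] : ∃ (E : ModuleCat.{u} B) (i : M →ₗ[B] E),
      Function.Injective i ∧ Module.Finite B E ∧ Module.Injective B E := by
  let Q := Injective.under M
  have : CategoryTheory.Injective (ModuleCat.of B Q) :=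
    inferInstanceAs (CategoryTheory.Injective (Injective.under M))
  have : Module.Injective B Q := Module.injective_module_of_injective_object B Q
  let ι : M →ₗ[B] Q := (Injective.ι M).hom
  have hι : Function.Injective ι := (ModuleCat.mono_iff_injective _).1 inferInstance
  let _ : Module R Q := Module.compHom Q (algebraMap R B)
  have : IsScalarTower R B Q := ⟨fun r b x => by rw [Algebra.smul_def, mul_smul]; rfl⟩
  obtain ⟨E, hE⟩ := exists_maximal_isEssentialExtension (LinearMap.range ι)
  obtain ⟨r, hr⟩ := exists_retraction_of_maximal_isEssentialExtension hE
  have : Module.Finite R (LinearMap.range ι) := .trans B _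
  have : IsNoetherian R (LinearMap.range ι) := isNoetherian_of_isNoetherianRing_of_finite R _
  have : IsNoetherian R E := hE.1.isNoetherian R
  exact ⟨.of B E, ι.codRestrict E fun x => hE.1.1 ⟨x, rfl⟩,
    fun x y h => hι (congrArg Subtype.val h), Module.Finite.of_restrictScalars_finite R B E,
    IsSummand.injective ⟨E.subtype, r, hr⟩⟩

end ArtinAlgebras

section FinitisticDimension

variable {B : Type u} [Ring B] {t : ℕ}

theorem InP.exists_shortExact {M E : ModuleCat.{u} B} (hM : InP M) (i : M ⟶ E) [Mono i]
    (hE : HasSpecialCover InP (FinitePdLE t) E) :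
    ∃ S : ShortComplex (ModuleCat.{u} B), S.ShortExact ∧ S.X₁ = M ∧ pdLE S.X₂ t ∧ InP S.X₃ := by
  obtain ⟨X, f, hX, hf⟩ := hE
  obtain ⟨h, hh⟩ := hf.exists_lift hM i
  have : Mono h := mono_of_mono_fac hh
  have hS : (ShortComplex.mk h (Limits.cokernel.π h) (Limits.cokernel.condition h)).ShortExact :=
    { exact := ShortComplex.exact_cokernel h }
  exact ⟨_, hS, rfl, hX.2, inP_X₃_of_shortExact hS hM hX.inP⟩

theorem InP.pdLE_of_forall_exists_shortExact {m : ℕ}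
    (hS : ∀ M : ModuleCat.{u} B, InP M → ∃ S : ShortComplex (ModuleCat.{u} B),
      S.ShortExact ∧ S.X₁ = M ∧ pdLE S.X₂ t ∧ InP S.X₃)
    (hm : ∀ M : ModuleCat.{u} B, InP M → pdLE M (t + m)) {M : ModuleCat.{u} B} (hM : InP M) :
    pdLE M t := by
  induction m generalizing M with
  | zero => exact hm M hM
  | succ m ih =>
    refine ih (fun M hM => ?_) hM
    obtain ⟨S, hS, rfl, h₂, h₃⟩ := hS M hM
    exact pdLE_X₁_of_shortExact hS (h₂.mono (t.le_add_right m)) (hm _ h₃)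

theorem InP.projDim_le_findim {M : ModuleCat.{u} B} (hM : InP M) : projDim M ≤ findim B :=
  le_sSup ⟨M, hM, rfl⟩

theorem findim_le_iff : findim B ≤ t ↔ ∀ M : ModuleCat.{u} B, InP M → pdLE M t := by
  refine ⟨fun h M hM => projDim_le_iff.1 (hM.projDim_le_findim.trans h), fun h => sSup_le ?_⟩
  rintro _ ⟨M, hM, rfl⟩
  exact projDim_le_iff.2 (h M hM)

theorem hasSpecialCover_of_injective [IsArtinianRing B] {ι : Type*} {I A : ι → ModuleCat.{u} B}
    (hI : ∀ E : ModuleCat.{u} B, Module.Finite B E → Module.Injective B E → Indec E →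
      ∃ j, Nonempty (E ≃ₗ[B] I j))
    {f : ∀ j, A j →ₗ[B] I j} (hf : ∀ j, IsRightApprox InP (f j)) (hA : ∀ j, pdLE (A j) t)
    (E : ModuleCat.{u} B) [Module.Finite B E] [Module.Injective B E] :
    HasSpecialCover InP (FinitePdLE t) E := by
  refine prop_of_forall_indec_isSummand _ E fun S hS hind => ?_
  have hfin : Module.Finite B S := by
    obtain ⟨s, r, hrs⟩ := hS
    exact .of_surjective r (LinearMap.surjective_of_comp_eq_id s r hrs)
  obtain ⟨j, ⟨e⟩⟩ := hI S hfin hS.injective hind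
  exact ((hf j).comp_of_leftInverse (s := e.toLinearMap) e.symm_comp).hasSpecialCover (hA j)

end FinitisticDimension

theorem stmt_11_general {B : Type u} [Ring B] [IsArtinianRing B]
    (hinj : ∀ M : ModuleCat.{u} B, Module.Finite B M → ∃ (E : ModuleCat.{u} B) (i : M →ₗ[B] E),
      Function.Injective i ∧ Module.Finite B E ∧ Module.Injective B E)
    (hcf : ContravariantlyFinite (InP (A := B))) {ι : Type*} {I A : ι → ModuleCat.{u} B}
    (hI : ∀ E : ModuleCat.{u} B, Module.Finite B E → Module.Injective B E → Indec E →
      ∃ j, Nonempty (E ≃ₗ[B] I j))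
    {f : ∀ j, A j →ₗ[B] I j} (hf : ∀ j, IsRightApprox InP (f j)) :
    findim B = (⨆ j, projDim (A j)) ∧ findim B ≠ ⊤ := by
  obtain ⟨m, hm⟩ := hcf.exists_forall_pdLE
  have hfin : findim B ≠ ⊤ :=
    ne_top_of_le_ne_top (ENat.natCast_ne_top m) (findim_le_iff.2 hm)
  have hge : ⨆ j, projDim (A j) ≤ findim B := iSup_le fun j => (hf j).1.projDim_le_findim
  obtain ⟨t, ht⟩ := ENat.ne_top_iff_exists.1 (ne_top_of_le_ne_top hfin hge)
  refine ⟨le_antisymm (ht ▸ findim_le_iff.2 fun M hM => ?_) hge, hfin⟩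
  have hA (j : ι) : pdLE (A j) t :=
    projDim_le_iff.1 (ht ▸ le_iSup (fun j => projDim (A j)) j)
  refine hM.pdLE_of_forall_exists_shortExact (fun M hM => ?_)
    fun M hM => (hm M hM).mono (m.le_add_left t)
  obtain ⟨E, i, hi, _, _⟩ := hinj M hM.1
  have : Mono (ModuleCat.ofHom i) := (ModuleCat.mono_iff_injective _).2 hi
  exact hM.exists_shortExact (ModuleCat.ofHom i) (hasSpecialCover_of_injective hI hf hA E)

/-- If `𝒫` is contravariantly finite, then `findim Λ` equals the maximum of the
projective dimensions of the minimal right `𝒫`-approximations of the indecomposable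
injectives; in particular it is finite. -/
theorem stmt_11 (Λ : Type u) [Ring Λ] (R : Type u) [CommRing R] [IsArtinianRing R]
    [Algebra R Λ] [Module.Finite R Λ]
    (hcf : ContravariantlyFinite (fun M : ModuleCat.{u} Λᵐᵒᵖ => InP M))
    {n : ℕ} (I : Fin n → ModuleCat.{u} Λᵐᵒᵖ) (hI : IsCompleteIndecInjFamily I)
    (A : Fin n → ModuleCat.{u} Λᵐᵒᵖ) (f : ∀ j, A j →ₗ[Λᵐᵒᵖ] I j)
    (hf : ∀ j, IsMinimalRightApprox InP (f j)) :
    findim Λᵐᵒᵖ = (⨆ j, projDim (A j)) ∧ findim Λᵐᵒᵖ ≠ ⊤ := by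
  have : IsArtinianRing Λᵐᵒᵖ := .of_finite R Λᵐᵒᵖ
  exact stmt_11_general (fun M _ => exists_finite_injective R M) hcf hI.2.1 fun j => (hf j).1
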